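/- Let n ≥ 1, let f : {0,1}^n → {0,1} be a conservative local rule of width n, and let m ≥ n. Let b = (b_1,…,b_m) be a finite tuple over ℤ ∪ {•} with increasing labels, meaning: whenever 1 ≤ i < j ≤ m, b_i = u ∈ ℤ, b_j = v ∈ ℤ, and b_l = • for all i < l < j, then v = u + 1. Then the tuple c = (c_1,…,c_{m−n+1}) defined by c_i = f̂(b_i, b_{i+1}, …, b_{i+n−1}) also has increasing labels. -/

import Mathlib

/-- A local rule `f` of width `n` is `L`-conservative if for every `L`-periodic
bisequence `x : ℤ → Fin 2`, the sum of `f` applied to the `n`-blocks starting at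
positions `1,…,L` equals the sum of `x` over positions `1,…,L`. -/
def LCons (n : ℕ) (f : (Fin n → Fin 2) → Fin 2) (L : ℕ) : Prop :=
  ∀ x : ℤ → Fin 2, (∀ i : ℤ, x (i + L) = x i) →
    (∑ i ∈ Finset.range L, (f (fun k => x ((i : ℤ) + 1 + (k : ℕ)))).val) =
      ∑ i ∈ Finset.range L, (x ((i : ℤ) + 1)).val

/-- `‖k‖ = 1` if `k ∈ ℤ`, and `‖k‖ = 0` if `k = •` (here `• = none`). -/
def normO (k : Option ℤ) : Fin 2 := k.elim 0 (fun _ => 1)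

/-- `G(x₁,…,xₙ) = ∑_{k=1}^{n} f(0,…,0,‖x₁‖,…,‖x_k‖)`, the `k`-th summand having
`n-k` leading zeros followed by `‖x₁‖,…,‖x_k‖`. -/
def Ghat (n : ℕ) (f : (Fin n → Fin 2) → Fin 2) (x : Fin n → Option ℤ) : ℕ :=
  ∑ k : Fin n,
    (f (fun j : Fin n =>
      if h : (j : ℕ) + (k : ℕ) + 1 < n then 0
      else normO (x ⟨(j : ℕ) + (k : ℕ) + 1 - n, by
        have := j.isLt; have := k.isLt; omega⟩))).val

open Classical in
/-- The rule `f̂` on labeled sites corresponding to `f`: if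
`f(‖x₁‖,…,‖xₙ‖) = 1` then `f̂(x₁,…,xₙ) = x_l` where `l` is the least index with
`‖x₁‖ + ⋯ + ‖x_l‖ = G(x₁,…,xₙ)`, and `f̂(x₁,…,xₙ) = •` otherwise. -/
noncomputable def fhat (n : ℕ) (f : (Fin n → Fin 2) → Fin 2)
    (x : Fin n → Option ℤ) : Option ℤ :=
  if f (fun j => normO (x j)) = 1 then
    if h : ∃ i : ℕ, i < n ∧
        (∑ j : Fin n, if (j : ℕ) ≤ i then (normO (x j)).val else 0) = Ghat n f x
    then x ⟨Nat.find h, (Nat.find_spec h).1⟩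
    else none
  else none

/-- A finite tuple `b` over `ℤ ∪ {•}` has increasing labels if, whenever
`b i = some u`, `b j = some v` with `i < j` and all entries strictly between
`i` and `j` equal `•`, then `v = u + 1`. -/
def HasIncLabels (m : ℕ) (b : Fin m → Option ℤ) : Prop :=
  ∀ i j : Fin m, i < j → ∀ u v : ℤ, b i = some u → b j = some v →
    (∀ l : Fin m, i < l → l < j → b l = none) → v = u + 1

def fw (n : ℕ) (f : (Fin n → Fin 2) → Fin 2) (x : ℤ → Fin 2) (t : ℤ) : ℕ :=
  (f (fun k => x (t + (k : ℕ)))).val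

lemma sum_range_Ico (g : ℤ → ℕ) (a : ℤ) (L : ℕ) :
    ∑ i ∈ Finset.range L, g (a + i) = ∑ i ∈ Finset.Ico a (a + L), g i := by
  refine Finset.sum_nbij' (fun i => a + (i : ℤ)) (fun t => (t - a).toNat) ?_ ?_ ?_ ?_ ?_
  · intro i hi; simp at *; omega
  · intro i hi; simp at *; omega
  · intro i hi; simp
  · intro i hi; simp at *; omega
  · intro i hi; rfl

lemma sum_split (g : ℤ → ℕ) (a b c : ℤ) (h1 : a ≤ b) (h2 : b ≤ c) :
    ∑ i ∈ Finset.Ico a c, g i = ∑ i ∈ Finset.Ico a b, g i + ∑ i ∈ Finset.Ico b c, g i := by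
  rw [← Finset.sum_union (Finset.Ico_disjoint_Ico_consecutive a b c),
    Finset.Ico_union_Ico_eq_Ico h1 h2]

lemma sum_last (g : ℤ → ℕ) (a c : ℤ) (h1 : a ≤ c) :
    ∑ i ∈ Finset.Ico a (c + 1), g i = ∑ i ∈ Finset.Ico a c, g i + g c := by
  rw [sum_split g a c (c + 1) h1 (by omega)]
  have : Finset.Ico c (c + 1) = {c} := by ext i; simp; omega
  rw [this, Finset.sum_singleton]

lemma total (n : ℕ) (hn : 1 ≤ n) (f : (Fin n → Fin 2) → Fin 2)
    (hf : ∀ L : ℕ, 0 < L → LCons n f L) (x : ℤ → Fin 2) (a c : ℤ) (hac : a < c)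
    (hx : ∀ i, i < a ∨ c ≤ i → x i = 0) :
    ∑ i ∈ Finset.Ico (a - n + 1) c, fw n f x i = ∑ i ∈ Finset.Ico a c, (x i).val := by
  obtain ⟨L, hL⟩ : ∃ L : ℕ, (L : ℤ) = c - a + n - 1 := ⟨(c - a + n - 1).toNat, by omega⟩
  have key := hf L (by omega) (fun i => x (a - n + 1 + (i - 1) % L)) (by
    intro i
    have : (i + L - 1) % (L : ℤ) = (i - 1) % L := by
      rw [show i + L - 1 = i - 1 + (L : ℤ) by ring, Int.add_emod_right]
    simp only [this])
  have h1 : ∀ i ∈ Finset.range L,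
      (f (fun k => x (a - n + 1 + ((i : ℤ) + 1 + (k : ℕ) - 1) % L))).val
        = fw n f x (a - n + 1 + i) := by
    intro i hi
    simp only [Finset.mem_range] at hi
    unfold fw
    congr 2
    funext k
    have hk := k.isLt
    by_cases h : i + (k : ℕ) < L
    · rw [Int.emod_eq_of_lt (by omega) (by omega)]
      congr 1; ring
    · have : ((i : ℤ) + 1 + (k : ℕ) - 1) % L = i + (k : ℕ) - L := by
        rw [show (i : ℤ) + 1 + (k : ℕ) - 1 = (i + (k : ℕ) - L) + L by ring, Int.add_emod_right,
          Int.emod_eq_of_lt (by omega) (by omega)]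
      rw [this, hx _ (by omega), hx _ (by omega)]
  have h2 : ∀ i ∈ Finset.range L,
      (x (a - n + 1 + ((i : ℤ) + 1 - 1) % L)).val = (x (a - n + 1 + i)).val := by
    intro i hi
    simp only [Finset.mem_range] at hi
    rw [Int.emod_eq_of_lt (by omega) (by omega)]
    congr 2; ring
  rw [Finset.sum_congr rfl h1, Finset.sum_congr rfl h2, sum_range_Ico,
    sum_range_Ico (fun i => (x i).val)] at key
  rw [show a - n + 1 + (L : ℤ) = c by omega] at key
  rw [key, sum_split (fun i => (x i).val) (a - n + 1) a c (by omega) (by omega),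
    Finset.sum_eq_zero, zero_add]
  intro i hi
  simp only [Finset.mem_Ico] at hi
  rw [hx _ (by omega)]; rfl

lemma Ghat_eq (n : ℕ) (f : (Fin n → Fin 2) → Fin 2)
    (w : Fin n → Option ℤ) (x : ℤ → Fin 2) (s : ℤ)
    (h0 : ∀ i, i < s → x i = 0) (hw : ∀ k : Fin n, normO (w k) = x (s + (k : ℕ))) :
    Ghat n f w = ∑ i ∈ Finset.Ico (s - n + 1) (s + 1), fw n f x i := by
  have := sum_range_Ico (fw n f x) (s - n + 1) n
  rw [show s - n + 1 + (n : ℤ) = s + 1 by ring] at this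
  rw [← this, Ghat, ← Fin.sum_univ_eq_sum_range (fun i => fw n f x (s - n + 1 + (i : ℕ)))]
  refine Finset.sum_congr rfl fun k _ => ?_
  unfold fw
  congr 2
  funext j
  split_ifs with h
  · rw [h0]; omega
  · rw [hw]; congr 1; simp only; omega

lemma F_eq (n : ℕ) (hn : 1 ≤ n) (f : (Fin n → Fin 2) → Fin 2)
    (hf : ∀ L : ℕ, 0 < L → LCons n f L)
    (w : Fin n → Option ℤ) (x : ℤ → Fin 2) (a s c : ℤ) (has : a ≤ s) (hsc : s < c)
    (hx : ∀ i, i < a ∨ c ≤ i → x i = 0)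
    (hw : ∀ k : Fin n, normO (w k) = x (s + (k : ℕ))) :
    ∑ i ∈ Finset.Ico (a - n + 1) (s + 1), fw n f x i
      = ∑ i ∈ Finset.Ico a s, (x i).val + Ghat n f w := by
  have hG := Ghat_eq n f w (fun i => if i < s then 0 else x i) s
    (by intro i hi; simp [hi]) (by intro k; rw [hw]; simp)
  have t1 := total n hn f hf x a c (by omega) hx
  have t2 := total n hn f hf (fun i => if i < s then 0 else x i) s c hsc (by
    intro i hi
    rcases hi with hi | hi
    · simp [hi]
    · rw [hx i (Or.inr hi)]; simp)
  rw [sum_split _ _ (s + 1) c (by omega) (by omega), sum_split _ a s c (by omega) (by omega)] at t1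
  rw [sum_split _ _ (s + 1) c (by omega) (by omega), ← hG] at t2
  have e1 : ∑ i ∈ Finset.Ico (s + 1) c, fw n f (fun i => if i < s then 0 else x i) i
      = ∑ i ∈ Finset.Ico (s + 1) c, fw n f x i := by
    refine Finset.sum_congr rfl fun i hi => ?_
    simp only [Finset.mem_Ico] at hi
    unfold fw
    congr 2
    funext k
    have hk : ¬ (i + ((k : ℕ) : ℤ) < s) := by omega
    simp only [if_neg hk]
  have e2 : ∑ i ∈ Finset.Ico s c, ((if i < s then 0 else x i : Fin 2)).val
      = ∑ i ∈ Finset.Ico s c, (x i).val := by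
    refine Finset.sum_congr rfl fun i hi => ?_
    simp only [Finset.mem_Ico] at hi
    rw [if_neg (by omega)]
  simp only [e1, e2] at t2
  omega

/-- number of ones among the first entries -/
def pre (n : ℕ) (w : Fin n → Option ℤ) (i : ℕ) : ℕ :=
  ∑ j : Fin n, if (j : ℕ) ≤ i then (normO (w j)).val else 0

lemma Ghat_le (n : ℕ) (hn : 1 ≤ n) (f : (Fin n → Fin 2) → Fin 2)
    (hf : ∀ L : ℕ, 0 < L → LCons n f L) (w : Fin n → Option ℤ) :
    Ghat n f w ≤ pre n w (n - 1) := by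
  let x : ℤ → Fin 2 := fun i => if h : 0 ≤ i ∧ i < n then normO (w ⟨i.toNat, by omega⟩) else 0
  have hw : ∀ k : Fin n, normO (w k) = x (0 + (k : ℕ)) := by
    intro k
    simp [x]
  have hG := Ghat_eq n f w x 0 (by intro i hi; simp only [x]; rw [dif_neg (by omega)]) hw
  have t := total n hn f hf x 0 n (by omega)
    (by intro i hi; simp only [x]; rw [dif_neg (by omega)])
  rw [sum_split _ _ (0 + 1) n (by omega) (by omega), ← hG] at t
  have e := sum_range_Ico (fun i => (x i).val) 0 n
  rw [zero_add, ← Fin.sum_univ_eq_sum_range (fun i => (x (0 + (i : ℕ))).val)] at e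
  have e' : pre n w (n - 1) = ∑ i : Fin n, (x (0 + ((i : ℕ) : ℤ))).val := by
    refine Finset.sum_congr rfl fun k _ => ?_
    rw [if_pos (by omega), hw]
  omega

lemma Ghat_pos (n : ℕ) (hn : 1 ≤ n) (f : (Fin n → Fin 2) → Fin 2) (w : Fin n → Option ℤ)
    (h : f (fun j => normO (w j)) = 1) : 1 ≤ Ghat n f w := by
  unfold Ghat
  refine le_trans ?_ (Finset.single_le_sum (fun _ _ => Nat.zero_le _)
    (Finset.mem_univ (⟨n - 1, by omega⟩ : Fin n)))
  have : (fun j : Fin n => if h : (j : ℕ) + (n - 1) + 1 < n then (0 : Fin 2)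
      else normO (w ⟨(j : ℕ) + (n - 1) + 1 - n, by omega⟩)) = fun j => normO (w j) := by
    funext j
    rw [dif_neg (by omega)]
    congr 2
    ext
    simp only
    omega
  simp only [this, h]
  simp

lemma pre_succ (n : ℕ) (w : Fin n → Option ℤ) (i : ℕ) (hi : i + 1 < n) :
    pre n w (i + 1) = pre n w i + (normO (w ⟨i + 1, hi⟩)).val := by
  unfold pre
  have : (normO (w ⟨i + 1, hi⟩)).val
      = ∑ j : Fin n, if j = ⟨i + 1, hi⟩ then (normO (w j)).val else 0 := by simp
  rw [this, ← Finset.sum_add_distrib]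
  refine Finset.sum_congr rfl fun j _ => ?_
  simp only [Fin.ext_iff]
  split_ifs <;> omega

lemma pre_zero (n : ℕ) (w : Fin n → Option ℤ) (hn : 0 < n) :
    pre n w 0 = (normO (w ⟨0, hn⟩)).val := by
  unfold pre
  have : (normO (w ⟨0, hn⟩)).val
      = ∑ j : Fin n, if j = ⟨0, hn⟩ then (normO (w j)).val else 0 := by simp
  rw [this]
  refine Finset.sum_congr rfl fun j _ => ?_
  simp only [Fin.ext_iff]
  split_ifs <;> omega

lemma pre_eq (n : ℕ) (w : Fin n → Option ℤ) (x : ℤ → Fin 2) (s : ℤ)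
    (hw : ∀ k : Fin n, normO (w k) = x (s + (k : ℕ))) (i : ℕ) (hi : i < n) :
    pre n w i = ∑ t ∈ Finset.Ico s (s + i + 1), (x t).val := by
  rw [sum_last _ _ _ (by omega)]
  induction i with
  | zero => rw [pre_zero n w hi, hw]; simp
  | succ i ih =>
    rw [pre_succ n w i hi, ih (by omega), hw]
    push_cast
    rw [← add_assoc, sum_last _ s (s + i) (by omega)]

lemma normO_le (k : Option ℤ) : (normO k).val ≤ 1 := by omega

lemma fhat_some (n : ℕ) (f : (Fin n → Fin 2) → Fin 2) (w : Fin n → Option ℤ) (u : ℤ)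
    (h : fhat n f w = some u) :
    f (fun j => normO (w j)) = 1 ∧ ∃ p : Fin n, w p = some u ∧ pre n w p = Ghat n f w := by
  unfold fhat at h
  split_ifs at h with h1 h2
  exact ⟨h1, _, h, (Nat.find_spec h2).2⟩

lemma fhat_none (n : ℕ) (hn : 1 ≤ n) (f : (Fin n → Fin 2) → Fin 2)
    (hf : ∀ L : ℕ, 0 < L → LCons n f L) (w : Fin n → Option ℤ)
    (h : fhat n f w = none) : f (fun j => normO (w j)) = 0 := by
  by_contra h0
  have h1 : f (fun j => normO (w j)) = 1 := by omega
  have hle := Ghat_le n hn f hf w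
  have hpos := Ghat_pos n hn f w h1
  have hex : ∃ i : ℕ, i < n ∧ pre n w i = Ghat n f w := by
    have hq : ∃ i, Ghat n f w ≤ pre n w i := ⟨_, hle⟩
    refine ⟨Nat.find hq, ?_, ?_⟩
    · have := Nat.find_min' hq hle; omega
    · have hs := Nat.find_spec hq
      have hlt := Nat.find_min' hq hle
      rcases hc : Nat.find hq with _ | i
      · rw [hc, pre_zero n w hn] at hs
        rw [pre_zero n w hn]
        have := normO_le (w ⟨0, hn⟩)
        omega
      · have hm := Nat.find_min hq (m := i) (by omega)
        rw [hc] at hs hlt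
        rw [pre_succ n w i (by omega)] at hs ⊢
        have := normO_le (w ⟨i + 1, by omega⟩)
        omega
  unfold fhat at h
  rw [if_pos h1] at h
  classical
  have hex' : ∃ i : ℕ, i < n ∧
      (∑ j : Fin n, if (j : ℕ) ≤ i then (normO (w j)).val else 0) = Ghat n f w := hex
  rw [dif_pos hex'] at h
  have hs := Nat.find_spec hex'
  have hmin : ∀ i, i < Nat.find hex' → ¬ (i < n ∧ pre n w i = Ghat n f w) :=
    fun i hi => Nat.find_min hex' hi
  have key : ∀ (r : ℕ) (hr : r < n), w ⟨r, hr⟩ = none → pre n w r = Ghat n f w →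
      (∀ i, i < r → ¬ (i < n ∧ pre n w i = Ghat n f w)) → False := by
    intro r hr hw he hm
    rcases r with _ | i
    · rw [pre_zero n w hn, hw] at he
      simp [normO] at he
      omega
    · rw [pre_succ n w i hr, hw] at he
      simp [normO] at he
      exact hm i (by omega) ⟨by omega, he⟩
  refine key _ _ h ?_ ?_
  · refine Eq.trans ?_ hs.2
    unfold pre
    congr!
  · convert hmin

/-- If `f` is a conservative rule of width `n ≥ 1`, `m ≥ n`, and the `m`-tuple
`b` over `ℤ ∪ {•}` has increasing labels, then the `(m-n+1)`-tuple
`c i = f̂(b i, b (i+1), …, b (i+n-1))` also has increasing labels. -/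
theorem stmt_11 (n : ℕ) (hn : 1 ≤ n) (f : (Fin n → Fin 2) → Fin 2)
    (hf : ∀ L : ℕ, 0 < L → LCons n f L)
    (m : ℕ) (hm : n ≤ m) (b : Fin m → Option ℤ) (hb : HasIncLabels m b) :
    HasIncLabels (m - n + 1)
      (fun i : Fin (m - n + 1) =>
        fhat n f (fun k : Fin n =>
          b ⟨(i : ℕ) + (k : ℕ), by have := i.isLt; have := k.isLt; omega⟩)) := by
  let X : ℤ → Option ℤ := fun i =>
    if h : 0 ≤ i ∧ i < m then b ⟨i.toNat, by omega⟩ else none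
  have hXb : ∀ k : Fin m, X ((k : ℕ) : ℤ) = b k := by intro k; simp [X]
  let x : ℤ → Fin 2 := fun i => normO (X i)
  have hx : ∀ i, i < 0 ∨ (m : ℤ) ≤ i → x i = 0 := by
    intro i hi
    simp only [x, X]
    rw [dif_neg (by omega)]; rfl
  intro i j hij u v hu hv hl
  have hij' : (i : ℕ) < j := hij
  let w : Fin (m - n + 1) → Fin n → Option ℤ := fun i k =>
    b ⟨(i : ℕ) + (k : ℕ), by have := i.isLt; have := k.isLt; omega⟩
  have hwX : ∀ i k, w i k = X (((i : ℕ) : ℤ) + (k : ℕ)) := by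
    intro i k
    have := hXb ⟨(i : ℕ) + (k : ℕ), by have := i.isLt; have := k.isLt; omega⟩
    simp only [Nat.cast_add] at this
    exact this.symm
  have hw : ∀ i k, normO (w i k) = x (((i : ℕ) : ℤ) + (k : ℕ)) := by
    intro i k; rw [hwX]
  have hfw : ∀ i : Fin (m - n + 1), (f fun k => normO (w i k)).val = fw n f x ((i : ℕ) : ℤ) := by
    intro i; unfold fw; simp only [hw]
  have main : ∀ (i : Fin (m - n + 1)) (u : ℤ), fhat n f (w i) = some u →
      fw n f x ((i : ℕ) : ℤ) = 1 ∧ ∃ p : Fin m, b p = some u ∧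
        ∑ t ∈ Finset.Ico (0 : ℤ) ((p : ℕ) + 1 : ℤ), (x t).val
          = ∑ t ∈ Finset.Ico (0 - n + 1 : ℤ) (((i : ℕ) : ℤ) + 1), fw n f x t := by
    intro i u h
    obtain ⟨h1, p, hp, hpre⟩ := fhat_some n f (w i) u h
    refine ⟨?_, ⟨(i : ℕ) + (p : ℕ), by have := i.isLt; have := p.isLt; omega⟩, hp, ?_⟩
    · rw [← hfw, h1]; rfl
    · have hi := i.isLt
      rw [F_eq n hn f hf (w i) x 0 ((i : ℕ) : ℤ) m (by omega) (by omega) hx (hw i), ← hpre,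
        pre_eq n (w i) x ((i : ℕ) : ℤ) (hw i) p p.isLt,
        ← sum_split (fun t => (x t).val) _ _ _ (by omega) (by omega)]
      simp
  obtain ⟨-, p, hp, hpc⟩ := main i u hu
  obtain ⟨hj1, q, hq, hqc⟩ := main j v hv
  have hF : ∑ t ∈ Finset.Ico (0 - n + 1 : ℤ) (((j : ℕ) : ℤ) + 1), fw n f x t
      = ∑ t ∈ Finset.Ico (0 - n + 1 : ℤ) (((i : ℕ) : ℤ) + 1), fw n f x t + 1 := by
    rw [sum_last _ _ _ (by omega), hj1,
      sum_split _ _ (((i : ℕ) : ℤ) + 1) ((j : ℕ) : ℤ) (by omega) (by omega)]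
    rw [Finset.sum_eq_zero (s := Finset.Ico (((i : ℕ) : ℤ) + 1) ((j : ℕ) : ℤ)), add_zero]
    intro t ht
    simp only [Finset.mem_Ico] at ht
    have hj := j.isLt
    have h0 := fhat_none n hn f hf (w ⟨t.toNat, by omega⟩)
      (hl ⟨t.toNat, by omega⟩ (by rw [Fin.lt_def]; simp only; omega)
        (by rw [Fin.lt_def]; simp only; omega))
    have h2 := hfw ⟨t.toNat, by omega⟩
    rw [h0] at h2
    simp only [Int.toNat_of_nonneg (show 0 ≤ t by omega)] at h2
    rw [← h2]; rfl
  have hpq : (p : ℕ) < q := by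
    by_contra hc
    have := sum_split (fun t => (x t).val) 0 ((q : ℕ) + 1 : ℤ) ((p : ℕ) + 1 : ℤ)
      (by omega) (by omega)
    omega
  refine hb p q hpq u v hp hq ?_
  intro l hpl hlq
  have hpl' : (p : ℕ) < l := hpl
  have hlq' : (l : ℕ) < q := hlq
  have s1 := sum_split (fun t => (x t).val) 0 ((p : ℕ) + 1 : ℤ) ((l : ℕ) : ℤ)
      (by omega) (by omega)
  have s2 := sum_last (fun t => (x t).val) 0 ((l : ℕ) : ℤ) (by omega)
  have s3 := sum_split (fun t => (x t).val) 0 ((l : ℕ) + 1 : ℤ) ((q : ℕ) : ℤ)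
      (by omega) (by omega)
  have s4 := sum_last (fun t => (x t).val) 0 ((q : ℕ) : ℤ) (by omega)
  have hxq : (x ((q : ℕ) : ℤ)).val = 1 := by simp only [x]; rw [hXb, hq]; rfl
  rcases hbl : b l with _ | z
  · rfl
  · have hxl : (x ((l : ℕ) : ℤ)).val = 1 := by simp only [x]; rw [hXb, hbl]; rfl
    simp only [hxl] at s2
    simp only [hxq] at s4
    omega
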